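/- The number of semistandard Young tableaux of shape λ with entries in {1,...,m} equals ∏_{s∈λ} (m + c(s))/h(s), where c(s) = j - i is the content and h(s) = λ_i + λ^t_j - i - j + 1 is the hook length of the box s at position (i,j); equivalently, s_λ(1,1,...,1) (m ones) = ∏_{s∈λ} (m + c(s))/h(s). -/

import Mathlib

open Finset

/-- Semistandard tableaux of shape `lam` with entries below `m`, extended by zero. -/
def HCSet (m : ℕ) (lam : ℕ → ℕ) : Set (ℕ → ℕ → ℕ) :=
  {T | (∀ i j, lam i ≤ j → T i j = 0) ∧ (∀ i j, j < lam i → T i j < m) ∧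
    (∀ i j, j + 1 < lam i → T i j ≤ T i (j + 1)) ∧
    (∀ i j, j < lam (i + 1) → T i j < T (i + 1) j)}

def HCFib (m : ℕ) (lam mu : ℕ → ℕ) : Set (ℕ → ℕ → ℕ) :=
  {T | T ∈ HCSet (m + 1) lam ∧ ∀ i j, j < lam i → (T i j < m ↔ j < mu i)}

def hcFibEquiv (m : ℕ) (lam mu : ℕ → ℕ) (h1 : ∀ i, lam (i + 1) ≤ mu i)
    (h2 : ∀ i, mu i ≤ lam i) : HCFib m lam mu ≃ HCSet m mu where
  toFun T := ⟨fun i j => if j < mu i then T.1 i j else 0, by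
    obtain ⟨T, ⟨a, b, c, d⟩, e⟩ := T
    refine ⟨?_, ?_, ?_, ?_⟩
    · intro i j h; simp; omega
    · intro i j h; simp only [h, if_true]; exact (e i j (h.trans_le (h2 i))).2 h
    · intro i j h
      have := c i j (h.trans_le (h2 i))
      simp only [h, if_true, show j < mu i by omega]; exact this
    · intro i j h
      have h3 := h1 i
      have h4 := h2 (i + 1)
      have := d i j (h.trans_le (h2 _))
      simp only [h, if_true, show j < mu i by omega]; exact this⟩
  invFun S := ⟨fun i j => if j < mu i then S.1 i j else if j < lam i then m else 0, by
    obtain ⟨S, a, b, c, d⟩ := S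
    refine ⟨⟨?_, ?_, ?_, ?_⟩, ?_⟩
    · intro i j h; have := h2 i; simp only []; split_ifs <;> omega
    · intro i j h; have := b i j; simp only []; split_ifs <;> grind
    · intro i j h; have := c i j; have := b i j; simp only []; split_ifs <;> grind
    · intro i j h; have := d i j; have := b i j; have h3 := h1 i; simp only []; split_ifs <;> grind
    · intro i j h; have := b i j; simp only []; split_ifs <;> grind⟩
  left_inv T := by
    obtain ⟨T, ⟨a, b, c, d⟩, e⟩ := T
    apply Subtype.ext; funext i j
    have := a i j; have := b i j; have := e i j
    have := h2 i
    simp only []; split_ifs <;> grind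
  right_inv S := by
    obtain ⟨S, a, b, c, d⟩ := S
    apply Subtype.ext; funext i j
    have := a i j
    simp only []; split_ifs <;> grind

def hcShape (m : ℕ) (a : Fin m → ℕ) (i : ℕ) : ℕ :=
  if h : i < m then a ⟨m - 1 - i, by omega⟩ - (m - 1 - i) else 0

theorem hc_row {m : ℕ} {lam : ℕ → ℕ} {T} (hT : T ∈ HCSet m lam) (i j k : ℕ) (h : j ≤ k)
    (hk : k < lam i) : T i j ≤ T i k := by
  induction k, h using Nat.le_induction with
  | base => exact le_rfl
  | succ k h ih => exact (ih (by omega)).trans (hT.2.2.1 i k hk)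

theorem hc_col {m : ℕ} {lam : ℕ → ℕ} (hl : Antitone lam) {T} (hT : T ∈ HCSet m lam) (i j : ℕ)
    (hk : j < lam i) : i ≤ T i j := by
  induction i with
  | zero => simp
  | succ k ih =>
    have := ih (hk.trans_le (hl (Nat.le_succ k)))
    have := hT.2.2.2 k j hk
    omega

/-- the index set of the branching rule -/
def hcIdx (m : ℕ) (lam : ℕ → ℕ) : Finset (Fin m → ℕ) :=
  Fintype.piFinset fun i : Fin m => Ico (lam (m - i) + i) (lam (m - 1 - i) + i + 1)

theorem hc_shape_bounds (m : ℕ) (lam : ℕ → ℕ) (hm : lam (m + 1) = 0) (hl : Antitone lam)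
    (a) (ha : a ∈ hcIdx m lam) (i : ℕ) :
    lam (i + 1) ≤ hcShape m a i ∧ hcShape m a i ≤ lam i := by
  unfold hcShape
  split_ifs with h
  · have := Fintype.mem_piFinset.1 ha ⟨m - 1 - i, by omega⟩
    simp only [mem_Ico] at this
    rw [show m - (m - 1 - i) = i + 1 by omega, show m - 1 - (m - 1 - i) = i by omega] at this
    omega
  · have := hl (show m + 1 ≤ i + 1 by omega)
    omega

theorem hc_shape_antitone (m : ℕ) (lam : ℕ → ℕ) (hm : lam (m + 1) = 0) (hl : Antitone lam)
    (a) (ha : a ∈ hcIdx m lam) : Antitone (hcShape m a) :=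
  antitone_nat_of_succ_le fun i =>
    (hc_shape_bounds m lam hm hl a ha (i + 1)).2.trans (hc_shape_bounds m lam hm hl a ha i).1

theorem hc_exists (m : ℕ) (lam : ℕ → ℕ) (hm : lam (m + 1) = 0) (hl : Antitone lam) (T)
    (hT : T ∈ HCSet (m + 1) lam) : ∃ a : hcIdx m lam, T ∈ HCFib m lam (hcShape m a.1) := by
  have hex : ∀ i, ∃ j, lam i ≤ j ∨ m ≤ T i j := fun i => ⟨lam i, Or.inl le_rfl⟩
  classical
  have key : ∀ i, ∃ u, u ≤ lam i ∧ lam (i + 1) ≤ u ∧ ∀ j, j < lam i → (T i j < m ↔ j < u) := by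
    intro i
    refine ⟨Nat.find (hex i), Nat.find_min' _ (Or.inl le_rfl), ?_, ?_⟩
    · by_contra hc
      push Not at hc
      have h3 := hT.2.2.2 i _ hc
      have h4 := hT.2.1 (i + 1) _ hc
      have h6 := hl (Nat.le_succ i)
      rcases Nat.find_spec (hex i) with h5 | h5
      · simp only [Nat.succ_eq_add_one] at h6; omega
      · omega
    · intro j hj
      constructor
      · intro h
        by_contra hc
        push Not at hc
        have := hc_row hT i _ _ hc hj
        rcases Nat.find_spec (hex i) with h5 | h5 <;> omega
      · intro h
        have := Nat.find_min (hex i) h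
        omega
  choose u hu1 hu2 hu3 using key
  refine ⟨⟨fun i => u (m - 1 - i) + i, ?_⟩, hT, ?_⟩
  · refine Fintype.mem_piFinset.2 fun i => ?_
    have h1 := hu1 (m - 1 - i)
    have h2 := hu2 (m - 1 - i)
    rw [show m - 1 - (i : ℕ) + 1 = m - i by omega] at h2
    simp only [mem_Ico]; omega
  · intro i j hj
    rw [hu3 i j hj]
    unfold hcShape
    split_ifs with h
    · simp only []
      rw [show m - 1 - (m - 1 - i) = i by omega]; omega
    · have h1 := hc_col hl hT i j hj
      have := (hu3 i j hj).2
      omega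

theorem hc_unique (m : ℕ) (lam : ℕ → ℕ) (hm : lam (m + 1) = 0) (hl : Antitone lam) (T)
    (a b : hcIdx m lam) (hTa : T ∈ HCFib m lam (hcShape m a.1))
    (hTb : T ∈ HCFib m lam (hcShape m b.1)) : a = b := by
  apply Subtype.ext
  have hs : ∀ i, hcShape m a.1 i = hcShape m b.1 i := by
    intro i
    have h1 := (hc_shape_bounds m lam hm hl a a.2 i).2
    have h2 := (hc_shape_bounds m lam hm hl b b.2 i).2
    rcases lt_trichotomy (hcShape m a.1 i) (hcShape m b.1 i) with h | h | h
    · have h3 := hTa.2 i _ (h.trans_le h2)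
      have h4 := hTb.2 i _ (h.trans_le h2)
      omega
    · exact h
    · have h3 := hTa.2 i _ (h.trans_le h1)
      have h4 := hTb.2 i _ (h.trans_le h1)
      omega
  funext i
  have h1 := hs (m - 1 - i)
  have h2 := Fintype.mem_piFinset.1 a.2 i
  have h3 := Fintype.mem_piFinset.1 b.2 i
  simp only [mem_Ico] at h2 h3
  have e : (⟨m - 1 - (m - 1 - i), by omega⟩ : Fin m) = i := by ext; simp only []; omega
  unfold hcShape at h1
  rw [dif_pos (by omega), dif_pos (by omega), e] at h1
  omega

noncomputable def hcEquiv (m : ℕ) (lam : ℕ → ℕ) (hm : lam (m + 1) = 0) (hl : Antitone lam) :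
    HCSet (m + 1) lam ≃ Σ a : hcIdx m lam, HCSet m (hcShape m a.1) :=
  ((Equiv.sigmaFiberEquiv (fun T : HCSet (m + 1) lam =>
    Classical.choose (hc_exists m lam hm hl T.1 T.2))).symm).trans
  (Equiv.sigmaCongrRight fun a => Equiv.trans
    { toFun := fun T => ⟨T.1.1, by
        have := Classical.choose_spec (hc_exists m lam hm hl T.1.1 T.1.2)
        rw [T.2] at this; exact this⟩
      invFun := fun T => ⟨⟨T.1, T.2.1⟩, hc_unique m lam hm hl T.1 _ _
        (Classical.choose_spec (hc_exists m lam hm hl T.1 T.2.1)) T.2⟩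
      left_inv := fun T => rfl
      right_inv := fun T => rfl }
    (hcFibEquiv m lam (hcShape m a.1) (fun i => (hc_shape_bounds m lam hm hl a a.2 i).1)
      (fun i => (hc_shape_bounds m lam hm hl a a.2 i).2)))

theorem hc_det_sum (m : ℕ) (b : ℕ → ℕ) (hb : Monotone b) :
    ∑ a ∈ Fintype.piFinset (fun i : Fin m => Ico (b i) (b (i + 1))),
      (Matrix.of fun i j : Fin m => ((a i).choose j : ℚ)).det =
    (Matrix.of fun i j : Fin (m + 1) => ((b i).choose j : ℚ)).det := by
  classical
  have hsum : ∀ k n : ℕ, k ≤ n → ∀ j : ℕ, (∑ x ∈ Ico k n, (x.choose j : ℚ)) =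
      n.choose (j + 1) - k.choose (j + 1) := by
    intro k n h j
    induction n, h using Nat.le_induction with
    | base => simp
    | succ n h ih =>
      rw [sum_Ico_succ_top h, ih, Nat.choose_succ_succ]; push_cast; ring
  have h1 := (Matrix.detRowAlternating (R := ℚ) (n := Fin m)).toMultilinearMap.map_sum_finset
    (fun (i : Fin m) (x : ℕ) => fun j : Fin m => (x.choose j : ℚ))
    (fun i : Fin m => Ico (b i) (b (i + 1)))
  trans
  · exact h1.symm
  let B : Matrix (Fin (m + 1)) (Fin (m + 1)) ℚ := Matrix.of fun i j =>
    Fin.cases ((b 0).choose j : ℚ) (fun i : Fin m => ((b (i + 1)).choose j : ℚ) - (b i).choose j) i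
  rw [Matrix.det_eq_of_forall_row_eq_smul_add_pred (B := B) (fun _ => 1)
    (by intro j; simp [B]) (by intro i j; simp [B]), Matrix.det_succ_column_zero,
    Fin.sum_univ_succ]
  simp only [B, Matrix.of_apply, Fin.cases_succ, Fin.cases_zero, Fin.val_zero, Nat.choose_zero_right]
  simp only [Nat.cast_one, sub_self, mul_zero, zero_mul, sum_const_zero, add_zero, pow_zero, one_mul]
  change Matrix.det _ = _
  congr 1
  ext i j
  simp [Finset.sum_apply, hsum _ _ (hb (Nat.le_succ i))]

theorem hc_count (m : ℕ) : ∀ (lam : ℕ → ℕ) (_ : lam m = 0) (_ : Antitone lam),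
    Finite (HCSet m lam) ∧ (Nat.card (HCSet m lam) : ℚ) =
      (Matrix.of fun i j : Fin m => ((lam (m - 1 - i) + i).choose j : ℚ)).det := by
  induction m with
  | zero =>
    intro lam hm hl
    have h0 : ∀ i, lam i = 0 := fun i => by have := hl (Nat.zero_le i); omega
    have : HCSet 0 lam = {fun _ _ => 0} := by
      ext T
      simp only [HCSet, h0]
      constructor
      · rintro ⟨a, -⟩
        funext i j; exact a i j (Nat.zero_le _)
      · rintro rfl
        simp
    rw [this]
    refine ⟨inferInstance, by simp⟩
  | succ m ih =>
    intro lam hm hl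
    have e := hcEquiv m lam hm hl
    have ih' := fun a : hcIdx m lam => ih (hcShape m a.1) (by simp [hcShape])
      (hc_shape_antitone m lam hm hl a.1 a.2)
    have := fun a => (ih' a).1
    refine ⟨Finite.of_equiv _ e.symm, ?_⟩
    rw [Nat.card_congr e, Nat.card_sigma]
    push_cast
    rw [Finset.sum_congr rfl (fun a _ => (ih' a).2)]
    let b : ℕ → ℕ := fun i => lam (m - i) + i
    have hb : Monotone b := fun x y h => by
      have := hl (show m - y ≤ m - x by omega)
      simp only [b]; omega
    have hidx : hcIdx m lam = Fintype.piFinset (fun i : Fin m => Ico (b i) (b (i + 1))) := by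
      unfold hcIdx
      congr 1; funext i
      simp only [b]
      rw [show m - ((i : ℕ) + 1) = m - 1 - i by omega, add_assoc]
    have := hc_det_sum m b hb
    rw [← hidx] at this
    refine Eq.trans ?_ this
    rw [← Finset.sum_coe_sort (hcIdx m lam)]
    refine Finset.sum_congr rfl fun a _ => ?_
    congr 1
    ext i j
    have h2 := Fintype.mem_piFinset.1 a.2 i
    simp only [mem_Ico] at h2
    have e : (⟨m - 1 - (m - 1 - i), by omega⟩ : Fin m) = i := by ext; simp only []; omega
    simp only [Matrix.of_apply]
    unfold hcShape
    rw [dif_pos (by omega), e]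
    congr 2
    omega

theorem hc_row_hook (m p : ℕ) (hp : p < m) (lam c : ℕ → ℕ) (hl : Antitone lam) (hm : lam m = 0)
    (hc : ∀ k j, k < c j ↔ j < lam k) :
    (∏ j ∈ range (lam (m - 1 - p)), (lam (m - 1 - p) + c j - (m - 1 - p) - j - 1)) *
      ∏ q ∈ range p, (lam (m - 1 - p) + p - (lam (m - 1 - q) + q)) =
      (lam (m - 1 - p) + p).factorial := by
  classical
  set i := m - 1 - p with hi
  have hcm : ∀ j, c j ≤ m := fun j => by
    have := hc m j
    omega
  have hci : ∀ j, j < lam i → i < c j := fun j h => (hc i j).2 h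
  have hcanti : ∀ j j', j ≤ j' → c j' ≤ c j := fun j j' h => by
    by_contra hh
    push Not at hh
    have h1 := (hc (c j) j').1 hh
    have h2 := (hc (c j) j)
    omega
  have hlq : ∀ q, q < p → lam (m - 1 - q) ≤ lam i := fun q h => hl (by omega)
  have hlqq : ∀ q q', q ≤ q' → lam (m - 1 - q) ≤ lam (m - 1 - q') := fun q q' h => hl (by omega)
  have inj1 : Set.InjOn (fun j => lam i + c j - i - j - 1) (range (lam i) : Finset ℕ) := by
    intro j hj j' hj' h
    simp only [coe_range, Set.mem_Iio] at hj hj' h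
    have h1 := hci j hj
    have h2 := hci j' hj'
    rcases lt_trichotomy j j' with h3 | h3 | h3
    · have := hcanti j j' h3.le
      omega
    · exact h3
    · have := hcanti j' j h3.le
      omega
  have inj2 : Set.InjOn (fun q => lam i + p - (lam (m - 1 - q) + q)) (range p : Finset ℕ) := by
    intro j hj j' hj' h
    simp only [coe_range, Set.mem_Iio] at hj hj' h
    have h1 := hlq j hj
    have h2 := hlq j' hj'
    rcases lt_trichotomy j j' with h3 | h3 | h3
    · have := hlqq j j' h3.le
      omega
    · exact h3
    · have := hlqq j' j h3.le
      omega
  have hdisj : Disjoint ((range (lam i)).image (fun j => lam i + c j - i - j - 1))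
      ((range p).image (fun q => lam i + p - (lam (m - 1 - q) + q))) := by
    rw [disjoint_left]
    intro x hx hy
    obtain ⟨j, hj, rfl⟩ := mem_image.1 hx
    obtain ⟨q, hq, h⟩ := mem_image.1 hy
    rw [mem_range] at hj hq
    have h1 := hci j hj
    have h2 := hlq q hq
    have h3 := hc (m - 1 - q) j
    omega
  have hunion : ((range (lam i)).image (fun j => lam i + c j - i - j - 1)) ∪
      ((range p).image (fun q => lam i + p - (lam (m - 1 - q) + q))) =
      Ico 1 (lam i + p + 1) := by
    apply eq_of_subset_of_card_le
    · intro x hx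
      rw [mem_Ico]
      rcases mem_union.1 hx with hx | hx
      · obtain ⟨j, hj, rfl⟩ := mem_image.1 hx
        rw [mem_range] at hj
        have h1 := hci j hj
        have h2 := hcm j
        omega
      · obtain ⟨q, hq, rfl⟩ := mem_image.1 hx
        rw [mem_range] at hq
        have h2 := hlq q hq
        omega
    · rw [card_union_of_disjoint hdisj, card_image_of_injOn inj1, card_image_of_injOn inj2]
      simp
  rw [← prod_Ico_id_eq_factorial, ← hunion, prod_union hdisj, prod_image inj1, prod_image inj2]

theorem hc_weyl (m : ℕ) (b : ℕ → ℕ) (hb : Monotone b) :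
    (∏ i ∈ range m, (i.factorial : ℚ)) *
      (Matrix.of fun i j : Fin m => ((b i).choose j : ℚ)).det =
    ∏ p ∈ range m, ∏ q ∈ range p, ((b p - b q : ℕ) : ℚ) := by
  have h := Matrix.det_eval_matrixOfPolynomials_eq_det_vandermonde (fun i : Fin m ↦ (b i : ℚ))
      (fun i => descPochhammer ℚ i)
      (fun i => descPochhammer_natDegree ℚ i)
      (fun i => monic_descPochhammer ℚ i)
  have h2 := Matrix.det_mul_row (fun i : Fin m => ((i : ℕ).factorial : ℚ))
    (Matrix.of fun i j : Fin m => ((b i).choose j : ℚ))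
  rw [← Fin.prod_univ_eq_prod_range (fun i => (i.factorial : ℚ)), ← h2]
  trans (Matrix.vandermonde (fun i : Fin m ↦ (b i : ℚ))).det
  · rw [h]
    congr 1
    ext i j
    simp only [Matrix.of_apply]
    rw [descPochhammer_eval_eq_descFactorial ℚ, Nat.descFactorial_eq_factorial_mul_choose]
    push_cast; rfl
  · rw [Matrix.det_vandermonde, ← Fin.prod_univ_eq_prod_range
      (fun p => ∏ q ∈ range p, ((b p - b q : ℕ) : ℚ))]
    rw [Finset.prod_comm' (t' := univ) (s' := fun j => Iio j) (by simp)]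
    refine prod_congr rfl fun p _ => ?_
    refine prod_bij (fun q _ => (q : ℕ)) (by simp) (by simp [Fin.ext_iff]) ?_ ?_
    · intro q hq
      rw [mem_range] at hq
      exact ⟨⟨q, by omega⟩, by simpa [Fin.lt_def] using hq, rfl⟩
    · intro q hq
      rw [Nat.cast_sub (hb _)]
      have := mem_Iio.1 hq
      exact le_of_lt this

theorem hc_main (m : ℕ) (lam c : ℕ → ℕ) (hl : Antitone lam) (hm : lam m = 0)
    (hc : ∀ k j, k < c j ↔ j < lam k) :
    (Nat.card (HCSet m lam) : ℚ) = ∏ i ∈ range m, ∏ j ∈ range (lam i),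
      ((m : ℚ) + j - i) / ((lam i + c j - i - j - 1 : ℕ) : ℚ) := by
  rw [(hc_count m lam hm hl).2]
  have hw := hc_weyl m (fun i => lam (m - 1 - i) + i) (fun x y h => by
    have := hl (show m - 1 - y ≤ m - 1 - x by omega)
    simp only []; omega)
  have hf : (∏ i ∈ range m, (i.factorial : ℚ)) ≠ 0 :=
    prod_ne_zero_iff.2 fun i _ => by exact_mod_cast i.factorial_ne_zero
  apply mul_left_cancel₀ hf
  rw [hw, ← prod_range_reflect (fun i => ∏ j ∈ range (lam i), _), ← prod_mul_distrib]
  refine prod_congr rfl fun p hp => ?_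
  rw [mem_range] at hp
  have h1 := hc_row_hook m p hp lam c hl hm hc
  have h2 : p.factorial * ∏ j ∈ range (lam (m - 1 - p)), (p + 1 + j) =
    (lam (m - 1 - p) + p).factorial := by
    rw [← Nat.ascFactorial_eq_prod_range, Nat.factorial_mul_ascFactorial, add_comm]
  have h3 : (∏ j ∈ range (lam (m - 1 - p)),
      ((lam (m - 1 - p) + c j - (m - 1 - p) - j - 1 : ℕ) : ℚ)) ≠ 0 := by
    intro h0
    have : (∏ j ∈ range (lam (m - 1 - p)), (lam (m - 1 - p) + c j - (m - 1 - p) - j - 1)) = 0 := by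
      exact_mod_cast h0
    rw [this, zero_mul] at h1
    exact Nat.factorial_ne_zero _ h1.symm
  rw [prod_div_distrib, ← mul_div_assoc, eq_div_iff h3]
  have h4 : ∏ j ∈ range (lam (m - 1 - p)), ((m : ℚ) + j - ((m - 1 - p : ℕ) : ℚ)) =
      ∏ j ∈ range (lam (m - 1 - p)), ((p + 1 + j : ℕ) : ℚ) := by
    refine prod_congr rfl fun j _ => ?_
    rw [show m - 1 - p = m - (p + 1) by omega, Nat.cast_sub (by omega)]
    push_cast; ring
  rw [h4, mul_comm]
  exact_mod_cast h1.trans h2.symm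

theorem hc_empty (m : ℕ) (lam : ℕ → ℕ) (hl : Antitone lam) (hm : lam m ≠ 0) :
    Nat.card (HCSet m lam) = 0 := by
  have : IsEmpty (HCSet m lam) := ⟨fun T => by
    have h1 := hc_col hl T.2 m 0 (by omega)
    have h2 := T.2.2.1 m 0 (by omega)
    omega⟩
  exact Nat.card_of_isEmpty

/-- extension by zero -/
def hcExt (d : ℕ) (lam : Fin d → ℕ) (i : ℕ) : ℕ := if h : i < d then lam ⟨i, h⟩ else 0

theorem hcExt_fin (d : ℕ) (lam : Fin d → ℕ) (i : Fin d) : hcExt d lam i = lam i := by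
  simp [hcExt]

theorem hcExt_lt {d : ℕ} {lam : Fin d → ℕ} {i j : ℕ} (h : j < hcExt d lam i) : i < d := by
  by_contra hh
  simp [hcExt, hh] at h

theorem hcExt_lt' {d : ℕ} {lam : Fin d → ℕ} {i j : ℕ} (h : j < hcExt d lam i) :
    j < lam ⟨i, hcExt_lt h⟩ := by
  have := hcExt_lt h
  simpa [hcExt, this] using h

theorem hcExt_antitone (d : ℕ) (lam : Fin d → ℕ) (hl : Antitone lam) :
    Antitone (hcExt d lam) := by
  intro x y h
  unfold hcExt
  split_ifs with h1 h2
  · exact hl (by simpa using h)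
  · omega
  · omega
  · omega

theorem hc_card (d m : ℕ) (lam : Fin d → ℕ) (hl : Antitone lam) :
    Nat.card {T : {p : Fin d × ℕ // p.2 < lam p.1} → Fin m //
        (∀ c c' : {p : Fin d × ℕ // p.2 < lam p.1},
          c.1.1 = c'.1.1 → c.1.2 + 1 = c'.1.2 → T c ≤ T c') ∧
        (∀ c c' : {p : Fin d × ℕ // p.2 < lam p.1},
          c.1.2 = c'.1.2 → (c.1.1 : ℕ) + 1 = (c'.1.1 : ℕ) → T c < T c')} =
      Nat.card (HCSet m (hcExt d lam)) := by
  refine Nat.card_congr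
    { toFun := fun T => ⟨fun i j => if h : j < hcExt d lam i then
        (T.1 ⟨(⟨i, hcExt_lt h⟩, j), hcExt_lt' h⟩ : ℕ) else 0, ?_⟩
      invFun := fun S => ⟨fun c => ⟨S.1 c.1.1 c.1.2,
        S.2.2.1 _ _ (by rw [hcExt_fin]; exact c.2)⟩, ?_⟩
      left_inv := ?_
      right_inv := ?_ }
  · obtain ⟨T, hr, hcol⟩ := T
    refine ⟨?_, ?_, ?_, ?_⟩
    · intro i j h
      simp only []
      rw [dif_neg (by omega)]
    · intro i j h
      simp only []
      rw [dif_pos h]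
      exact Fin.is_lt _
    · intro i j h
      simp only []
      rw [dif_pos h, dif_pos (by omega)]
      exact hr _ _ rfl rfl
    · intro i j h
      simp only []
      have h' := h.trans_le (hcExt_antitone d lam hl (Nat.le_succ i))
      rw [dif_pos h, dif_pos h']
      exact hcol _ _ rfl rfl
  · obtain ⟨S, h1, h2, h3, h4⟩ := S
    constructor
    · rintro ⟨⟨i, j⟩, h⟩ ⟨⟨i', j'⟩, h'⟩ e1 e2
      simp only at e1 e2
      subst e1 e2
      exact h3 i j (by rw [hcExt_fin]; exact h')
    · rintro ⟨⟨i, j⟩, h⟩ ⟨⟨i', j'⟩, h'⟩ e1 e2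
      simp only at e1 e2
      subst e1
      have := h4 i j (by rw [e2, hcExt_fin]; exact h')
      rw [e2] at this
      exact this
  · intro T
    apply Subtype.ext
    funext c
    apply Fin.ext
    simp only []
    rw [dif_pos (by rw [hcExt_fin]; exact c.2)]
  · intro S
    apply Subtype.ext
    funext i j
    simp only []
    split_ifs with h
    · rfl
    · exact (S.2.1 i j (by omega)).symm

/-- Hook content formula: the number of semistandard Young tableaux of shape `λ`
(a partition given by an antitone function `lam : Fin d → ℕ`) with entries in
`{1,…,m}` equals `∏_{s∈λ} (m + c(s))/h(s)`, where for the box `s` in (0-indexed)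
row `i` and column `j` the content is `c(s) = j - i` and the hook length is
`h(s) = λ_i + λ^t_j - i - j - 1` (0-indexed form of `λ_i + λ^t_j - i - j + 1`
with 1-indexing), `λ^t_j = #{i : λ_i > j}` being the transpose partition.
A tableau is a function from the cells of `λ` to `Fin m` which is weakly
increasing along rows and strictly increasing down columns. -/
theorem hook_content_formula (d m : ℕ) (lam : Fin d → ℕ) (hlam : Antitone lam) :
    (Nat.card {T : {p : Fin d × ℕ // p.2 < lam p.1} → Fin m //
        (∀ c c' : {p : Fin d × ℕ // p.2 < lam p.1},
          c.1.1 = c'.1.1 → c.1.2 + 1 = c'.1.2 → T c ≤ T c') ∧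
        (∀ c c' : {p : Fin d × ℕ // p.2 < lam p.1},
          c.1.2 = c'.1.2 → (c.1.1 : ℕ) + 1 = (c'.1.1 : ℕ) → T c < T c')} : ℚ) =
      ∏ i : Fin d, ∏ j ∈ Finset.range (lam i),
        ((m : ℚ) + (j : ℚ) - (i : ℚ)) /
          ((lam i + (Finset.univ.filter (fun i' : Fin d => j < lam i')).card
              - (i : ℕ) - j - 1 : ℕ) : ℚ) := by
  classical
  rw [hc_card d m lam hlam]
  have hl := hcExt_antitone d lam hlam
  let c : ℕ → ℕ := fun j => (Finset.univ.filter (fun i' : Fin d => j < lam i')).card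
  have hc : ∀ k j, k < c j ↔ j < hcExt d lam k := by
    intro k j
    constructor
    · intro h
      by_contra hh
      have hsub : (Finset.univ.filter (fun i' : Fin d => j < lam i')).map Fin.valEmbedding ⊆
          range k := by
        intro x hx
        obtain ⟨i, hi, rfl⟩ := mem_map.1 hx
        rw [mem_filter] at hi
        rw [mem_range]
        by_contra hk
        have := hl (not_lt.1 hk)
        have h2 := hcExt_fin d lam i
        simp only [Fin.valEmbedding_apply] at this
        omega
      have := card_le_card hsub
      rw [card_map, card_range] at this
      exact absurd h (not_lt.2 this)
    · intro h
      have hkd := hcExt_lt h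
      have hsub : range (k + 1) ⊆
          (Finset.univ.filter (fun i' : Fin d => j < lam i')).map Fin.valEmbedding := by
        intro x hx
        rw [mem_range] at hx
        refine mem_map.2 ⟨⟨x, by omega⟩, ?_, rfl⟩
        rw [mem_filter]
        refine ⟨mem_univ _, ?_⟩
        have := hl (show x ≤ k by omega)
        have h2 := hcExt_fin d lam ⟨x, by omega⟩
        simp only at h2
        omega
      have := card_le_card hsub
      rw [card_map, card_range] at this
      exact this
  let f : ℕ → ℚ := fun i => ∏ j ∈ range (hcExt d lam i),
      ((m : ℚ) + j - i) / ((hcExt d lam i + c j - i - j - 1 : ℕ) : ℚ)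
  have hf : ∀ i, hcExt d lam i = 0 → f i = 1 := fun i h => by simp [f, h]
  trans ∏ i ∈ range d, f i
  swap
  · rw [← Fin.prod_univ_eq_prod_range]
    refine prod_congr rfl fun i _ => ?_
    simp only [f, hcExt_fin, c]
  by_cases hm : hcExt d lam m = 0
  · rw [hc_main m _ c hl hm hc]
    change ∏ i ∈ range m, f i = _
    have h1 : ∏ i ∈ range m, f i = ∏ i ∈ range (max m d), f i := by
      refine prod_subset (range_subset_range.2 (le_max_left _ _)) fun i _ hi => hf i ?_
      rw [mem_range, not_lt] at hi
      have := hl hi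
      omega
    have h2 : ∏ i ∈ range d, f i = ∏ i ∈ range (max m d), f i := by
      refine prod_subset (range_subset_range.2 (le_max_right _ _)) fun i _ hi => hf i ?_
      rw [mem_range] at hi
      simp [hcExt, hi]
    rw [h1, h2]
  · rw [hc_empty m _ hl hm]
    have hpos : 0 < hcExt d lam m := Nat.pos_of_ne_zero hm
    symm
    rw [Nat.cast_zero]
    refine prod_eq_zero (mem_range.2 (hcExt_lt hpos)) ?_
    refine prod_eq_zero (mem_range.2 hpos) ?_
    simp
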